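/- The weight enumerator of the code d₂₄ ⊆ F₂²⁴, spanned by the eleven vectors of weight 4 whose ones occupy positions {2k-1, 2k, 2k+1, 2k+2} for k = 1, …, 11, equals x²⁴ + 66x²⁰y⁴ + 495x¹⁶y⁸ + 924x¹²y¹² + 495x⁸y¹⁶ + 66x⁴y²⁰ + y²⁴. -/

import Mathlib

open MvPolynomial

/-- Hamming weight of a vector in `F₂ⁿ`. -/
def wt {n : ℕ} (u : Fin n → ZMod 2) : ℕ :=
  (Finset.univ.filter fun i => u i ≠ 0).card

open scoped Classical in
/-- Genus-1 weight enumerator of a binary linear code `C ⊆ F₂ⁿ`,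
as a polynomial in two variables `X 0 = x`, `X 1 = y`. -/
noncomputable def weightEnum {n : ℕ} (C : Submodule (ZMod 2) (Fin n → ZMod 2)) :
    MvPolynomial (Fin 2) ℤ :=
  ∑ u : C, X 0 ^ (n - wt (u : Fin n → ZMod 2)) * X 1 ^ wt (u : Fin n → ZMod 2)

/-- The k-th generator of `d₂₄`: ones at positions `2k-1, 2k, 2k+1, 2k+2`
(1-based), i.e. at indices `2k-2, 2k-1, 2k, 2k+1` (0-based), for `k = 1, …, 11`. -/
def d24gen (k : Fin 11) : Fin 24 → ZMod 2 := fun i =>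
  if i.val = 2 * k.val ∨ i.val = 2 * k.val + 1 ∨ i.val = 2 * k.val + 2 ∨
      i.val = 2 * k.val + 3 then 1 else 0

/-- The code `d₂₄ ⊆ F₂²⁴`. -/
def d24 : Submodule (ZMod 2) (Fin 24 → ZMod 2) :=
  Submodule.span (ZMod 2) (Set.range d24gen)

/-!
The code `d₂ₙ` arises from the even-weight code of length `n` by writing every coordinate twice.
The even-weight code has `n.choose k` words of each even weight `k`, and doubling the coordinates
substitutes `x²` and `y²` for `x` and `y` in the weight enumerator.
-/

/-- The zero-sum code (single parity-check code) of length `n` over `R`. For `R = ZMod 2` it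
consists of the vectors of even weight. -/
def zeroSumCode (R : Type*) [Semiring R] (n : ℕ) : Submodule R (Fin n → R) :=
  LinearMap.ker (∑ i, LinearMap.proj i : (Fin n → R) →ₗ[R] R)

theorem mem_zeroSumCode {R : Type*} [Semiring R] {n : ℕ} {u : Fin n → R} :
    u ∈ zeroSumCode R n ↔ ∑ i, u i = 0 := by
  simp [zeroSumCode]

-- Modulo the differences of neighbouring unit vectors all unit vectors agree, so a vector `u`
-- is congruent to `(∑ i, u i) • e₀`.
theorem span_single_succ_sub_single_castSucc (R : Type*) [Ring R] (n : ℕ) :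
    Submodule.span R (Set.range fun k : Fin n =>
      (Pi.single k.succ 1 - Pi.single k.castSucc 1 : Fin (n + 1) → R)) =
      zeroSumCode R (n + 1) := by
  apply le_antisymm
  · rw [Submodule.span_le]
    rintro _ ⟨k, rfl⟩
    simp [mem_zeroSumCode, Finset.sum_sub_distrib]
  · intro u hu
    set S := Submodule.span R (Set.range fun k : Fin n =>
      (Pi.single k.succ 1 - Pi.single k.castSucc 1 : Fin (n + 1) → R))
    have single_sub_mem (i : Fin (n + 1)) : Pi.single i 1 - Pi.single 0 1 ∈ S := by
      induction i using Fin.induction with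
      | zero => simp
      | succ k ih =>
        rw [← sub_add_sub_cancel _ (Pi.single k.castSucc 1)]
        exact S.add_mem (Submodule.subset_span ⟨k, rfl⟩) ih
    have hu_eq : u = ∑ i, u i • (Pi.single i 1 - Pi.single 0 1) := by
      simp only [smul_sub, Finset.sum_sub_distrib, ← Finset.sum_smul, mem_zeroSumCode.1 hu,
        zero_smul, sub_zero]
      exact pi_eq_sum_univ' u
    rw [hu_eq]
    exact S.sum_mem fun i _ => S.smul_mem _ (single_sub_mem i)

/-- The map `(u₁, …, uₙ) ↦ (u₁, …, u₁, u₂, …, u₂, …)` that repeats every coordinate `r` times. -/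
def repeatCoords (R : Type*) [Semiring R] (n r : ℕ) : (Fin n → R) →ₗ[R] (Fin (n * r) → R) :=
  LinearMap.funLeft R R Fin.divNat

theorem repeatCoords_injective (R : Type*) [Semiring R] (n r : ℕ) [NeZero r] :
    Function.Injective (repeatCoords R n r) :=
  LinearMap.funLeft_injective_of_surjective R R _
    (Prod.fst_surjective.comp finProdFinEquiv.symm.surjective)

theorem sum_divNat {M : Type*} [AddCommMonoid M] {n : ℕ} (r : ℕ) (f : Fin n → M) :
    ∑ i : Fin (n * r), f i.divNat = r • ∑ j, f j :=
  calc
    ∑ i : Fin (n * r), f i.divNat = ∑ p : Fin n × Fin r, f p.1 :=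
      finProdFinEquiv.symm.sum_comp fun p => f p.1
    _ = r • ∑ j, f j := by simp [Fintype.sum_prod_type, Finset.smul_sum]

theorem wt_repeatCoords {n : ℕ} (r : ℕ) (u : Fin n → ZMod 2) :
    wt (repeatCoords (ZMod 2) n r u) = r * wt u := by
  simp only [wt, Finset.card_filter]
  exact sum_divNat r fun j => if u j ≠ 0 then 1 else 0

theorem weightEnum_map_repeatCoords {n : ℕ} (r : ℕ) [NeZero r]
    (C : Submodule (ZMod 2) (Fin n → ZMod 2)) :
    weightEnum (C.map (repeatCoords (ZMod 2) n r)) = expand r (weightEnum C) := by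
  classical
  have h_inj := repeatCoords_injective (ZMod 2) n r
  simp only [weightEnum, map_sum, map_mul, map_pow, expand_X, ← pow_mul]
  refine (Fintype.sum_equiv (Submodule.equivMapOfInjective _ h_inj C).toEquiv _ _ fun u => ?_).symm
  simp [wt_repeatCoords, Nat.mul_sub, mul_comm n r]

theorem ite_ne_zero_one_zero (x : ZMod 2) : (if x ≠ 0 then 1 else 0) = x := by
  revert x; decide

/-- The correspondence between binary vectors and their supports, used to count the vectors of
given weight. -/
def supportEquiv (n : ℕ) : (Fin n → ZMod 2) ≃ Finset (Fin n) where
  toFun u := Finset.univ.filter fun i => u i ≠ 0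
  invFun s i := if i ∈ s then 1 else 0
  left_inv u := by
    funext i
    simpa using ite_ne_zero_one_zero (u i)
  right_inv s := by simp

theorem sum_wt {M : Type*} [AddCommMonoid M] (n : ℕ) (f : ℕ → M) :
    ∑ u : Fin n → ZMod 2, f (wt u) = ∑ k ∈ Finset.range (n + 1), n.choose k • f k :=
  calc
    ∑ u : Fin n → ZMod 2, f (wt u) = ∑ s : Finset (Fin n), f s.card :=
      (supportEquiv n).sum_comp fun s => f s.card
    _ = ∑ k ∈ Finset.range (n + 1), n.choose k • f k := by
      rw [← Finset.powerset_univ, Finset.sum_powerset_apply_card, Finset.card_fin]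

theorem mem_zeroSumCode_iff_even_wt {n : ℕ} {u : Fin n → ZMod 2} :
    u ∈ zeroSumCode (ZMod 2) n ↔ Even (wt u) := by
  have sum_eq_wt : ∑ i, u i = (wt u : ZMod 2) := by
    simp only [wt, ← Finset.sum_boole, ite_ne_zero_one_zero]
  rw [mem_zeroSumCode, sum_eq_wt, ZMod.natCast_eq_zero_iff_even]

theorem weightEnum_zeroSumCode (n : ℕ) :
    weightEnum (zeroSumCode (ZMod 2) n) =
      ∑ k ∈ Finset.range (n + 1) with Even k, (n.choose k : MvPolynomial (Fin 2) ℤ) *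
        (X 0 ^ (n - k) * X 1 ^ k) := by
  let term (k : ℕ) : MvPolynomial (Fin 2) ℤ := X 0 ^ (n - k) * X 1 ^ k
  calc
    weightEnum (zeroSumCode (ZMod 2) n) = ∑ u with Even (wt u), term (wt u) :=
      (Finset.sum_subtype _ (by simp [mem_zeroSumCode_iff_even_wt]) fun u => term (wt u)).symm
    _ = ∑ u : Fin n → ZMod 2, if Even (wt u) then term (wt u) else 0 := Finset.sum_filter ..
    _ = ∑ k ∈ Finset.range (n + 1), n.choose k • if Even k then term k else 0 :=
      sum_wt n fun k => if Even k then term k else 0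
    _ = ∑ k ∈ Finset.range (n + 1) with Even k, (n.choose k : MvPolynomial (Fin 2) ℤ) * term k := by
      simp only [Finset.sum_filter, smul_ite, smul_zero, nsmul_eq_mul]

/-- The `k`-th generator of `dCode n`, with the same 0-based indexing as `d24gen`. -/
def dCodeGen (n : ℕ) (k : Fin n) : Fin ((n + 1) * 2) → ZMod 2 := fun i =>
  if i.val = 2 * k.val ∨ i.val = 2 * k.val + 1 ∨ i.val = 2 * k.val + 2 ∨
      i.val = 2 * k.val + 3 then 1 else 0

/-- The code `d₂ₙ₊₂ ⊆ F₂²ⁿ⁺²`, indexed by its number `n` of generators, so that `d₂₄` is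
`dCode 11`. -/
def dCode (n : ℕ) : Submodule (ZMod 2) (Fin ((n + 1) * 2) → ZMod 2) :=
  Submodule.span (ZMod 2) (Set.range (dCodeGen n))

theorem dCodeGen_eq_repeatCoords (n : ℕ) (k : Fin n) :
    dCodeGen n k =
      repeatCoords (ZMod 2) (n + 1) 2 (Pi.single k.succ 1 - Pi.single k.castSucc 1) := by
  funext i
  simp only [repeatCoords, LinearMap.funLeft_apply, Pi.add_apply, Pi.single_apply, Fin.ext_iff,
    Fin.coe_divNat, Fin.val_succ, Fin.val_castSucc, dCodeGen, CharTwo.sub_eq_add]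
  grind

theorem dCode_eq_map_zeroSumCode (n : ℕ) :
    dCode n = (zeroSumCode (ZMod 2) (n + 1)).map (repeatCoords (ZMod 2) (n + 1) 2) := by
  rw [← span_single_succ_sub_single_castSucc, Submodule.map_span, ← Set.range_comp, dCode]
  congr 2
  funext k
  exact dCodeGen_eq_repeatCoords n k

theorem weightEnum_d24_general (n : ℕ) :
    weightEnum (dCode n) =
      ∑ k ∈ Finset.range (n + 2) with Even k, ((n + 1).choose k : MvPolynomial (Fin 2) ℤ) *
        (X 0 ^ (2 * (n + 1 - k)) * X 1 ^ (2 * k)) := by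
  rw [dCode_eq_map_zeroSumCode, weightEnum_map_repeatCoords, weightEnum_zeroSumCode]
  simp only [map_sum, map_mul, map_pow, map_natCast, expand_X, ← pow_mul]

theorem weightEnum_d24 :
    weightEnum d24 =
      X 0 ^ 24 + 66 * X 0 ^ 20 * X 1 ^ 4 + 495 * X 0 ^ 16 * X 1 ^ 8 +
        924 * X 0 ^ 12 * X 1 ^ 12 + 495 * X 0 ^ 8 * X 1 ^ 16 +
        66 * X 0 ^ 4 * X 1 ^ 20 + X 1 ^ 24 := by
  refine (weightEnum_d24_general 11).trans ?_
  simp [Finset.sum_filter, Finset.sum_range_succ, Nat.choose, Nat.even_iff, mul_assoc]
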